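/- (Theorem 4.2, correctness of the Marginal Influence Sort algorithm on fully separable networks.) Let V_1, …, V_d be pairwise disjoint sets covering V and let p_1, …, p_d be fully separable topic influence probability functions with respect to this partition. Let λ_1, …, λ_d ∈ [0,1], D⁺ = {i : λ_i > 0} nonempty, p = Σ_j λ_j p_j (pointwise), and fix k ≥ 1. For each i ∈ D⁺, let (v^i_1, …, v^i_k) be a greedy sequence for λ_i p_i: the v^i_ℓ are distinct, v^i_ℓ ∈ V_i, and for every ℓ ≤ k and every u ∉ {v^i_1,…,v^i_{ℓ−1}}, MI(u | {v^i_1,…,v^i_{ℓ−1}}, λ_i p_i) ≤ MI(v^i_ℓ | {v^i_1,…,v^i_{ℓ−1}}, λ_i p_i). Define f(v^i_ℓ) = MI(v^i_ℓ | {v^i_1,…,v^i_{ℓ−1}}, λ_i p_i), and let C = {v^i_ℓ : i ∈ D⁺, 1 ≤ ℓ ≤ k} be the candidate set. Let w_1, …, w_k be k distinct elements of C such that: (sorted) f(w_1) ≥ f(w_2) ≥ … ≥ f(w_k), and f(u) ≤ f(w_k) for every u ∈ C \ {w_1,…,w_k}; (topic-order preserving) whenever v^i_ℓ = w_m and ℓ'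 < ℓ, the element v^i_{ℓ'} belongs to {w_1,…,w_{m−1}}. Then (w_1, …, w_k) is a greedy sequence for p: for every m ≤ k and every u ∈ V \ {w_1,…,w_{m−1}}, MI(u | {w_1,…,w_{m−1}}, p) ≤ MI(w_m | {w_1,…,w_{m−1}}, p). -/

import Mathlib

/-!
Full separability makes the influence graph split: no edge of nonzero probability leaves a part.
Hence the marginal influence of a vertex `u` depends only on the seeds and the edge probabilities
inside the part of `u`, because the coin tosses for all other edges integrate out.

At every stage the topic-order condition makes the vertices already selected from a part `V_i`
an initial segment of the greedy sequence of topic `i`. So the marginal influence under the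
mixture of any vertex of `V_i` not yet selected is at most the precomputed value of the next
candidate of topic `i`, which by sorting is at most the value of the vertex selected next. A
vertex in no active part is isolated, hence has the same marginal influence under the mixture as
under the topic of the vertex selected next, where greediness applies.
-/

open scoped Classical

/-- Weight of a live-edge set `L` under influence probability function `p`:
the product over all ordered pairs `(u,v)` with `u ≠ v` of `p u v` if the
edge is live and `1 - p u v` otherwise. -/
noncomputable def edgeWeight {V : Type*} [Fintype V] [DecidableEq V]
    (p : V → V → ℝ) (L : Finset (V × V)) : ℝ :=
  ∏ e ∈ (Finset.univ : Finset V).offDiag, (if e ∈ L then p e.1 e.2 else 1 - p e.1 e.2)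

/-- The set of vertices reachable from some vertex of `S` via edges of the
live-edge set `L` (reflexive–transitive closure). -/
noncomputable def reachSet {V : Type*} [Fintype V] [DecidableEq V]
    (S : Finset V) (L : Finset (V × V)) : Finset V :=
  Finset.univ.filter (fun x => ∃ s ∈ S, Relation.ReflTransGen (fun a b => (a, b) ∈ L) s x)

/-- Influence spread `σ(S, p)`: the sum over all live-edge sets `L`
(subsets of the off-diagonal pairs) of `w(p,L) * |R(S,L)|`. -/
noncomputable def infSpread {V : Type*} [Fintype V] [DecidableEq V]
    (S : Finset V) (p : V → V → ℝ) : ℝ :=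
  ∑ L ∈ ((Finset.univ : Finset V).offDiag).powerset, edgeWeight p L * (reachSet S L).card

/-- Marginal influence `MI(v | S, p) = σ(S ∪ {v}, p) − σ(S, p)`. -/
noncomputable def marginInf {V : Type*} [Fintype V] [DecidableEq V]
    (v : V) (S : Finset V) (p : V → V → ℝ) : ℝ :=
  infSpread (insert v S) p - infSpread S p

section OutcomeWeight

open Finset

variable {α R : Type*} [DecidableEq α] [CommRing R] {x : α → R}

/-- Weight of the outcome `L` of independent coin tosses indexed by `E`, the toss `e` succeeding
with probability `x e`. Varying `E`, unlike in `edgeWeight`, lets tosses be integrated out. -/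
def outcomeWeight (x : α → R) (E L : Finset α) : R :=
  ∏ e ∈ E, if e ∈ L then x e else 1 - x e

theorem outcomeWeight_insert_of_notMem {e : α} {E L : Finset α} (he : e ∉ E) (heL : e ∉ L) :
    outcomeWeight x (insert e E) L = (1 - x e) * outcomeWeight x E L := by
  rw [outcomeWeight, prod_insert he, if_neg heL, outcomeWeight]

theorem outcomeWeight_insert_insert {e : α} {E : Finset α} (he : e ∉ E) (L : Finset α) :
    outcomeWeight x (insert e E) (insert e L) = x e * outcomeWeight x E L := by
  rw [outcomeWeight, prod_insert he, if_pos (mem_insert_self e L), outcomeWeight]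
  congr 1
  refine prod_congr rfl fun e' he' => ?_
  simp only [mem_insert, ne_of_mem_of_not_mem he' he, false_or]

theorem sum_outcomeWeight_insert {e : α} {E : Finset α} (he : e ∉ E) (g : Finset α → R) :
    ∑ L ∈ (insert e E).powerset, outcomeWeight x (insert e E) L * g L =
      ∑ L ∈ E.powerset, outcomeWeight x E L * ((1 - x e) * g L + x e * g (insert e L)) := by
  rw [sum_powerset_insert he, ← sum_add_distrib]
  refine sum_congr rfl fun L hL => ?_
  have heL : e ∉ L := fun h => he (mem_powerset.1 hL h)
  rw [outcomeWeight_insert_of_notMem he heL, outcomeWeight_insert_insert he]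
  ring

theorem sum_outcomeWeight_mul_inter {A E : Finset α} (hAE : A ⊆ E) (g : Finset α → R) :
    ∑ L ∈ E.powerset, outcomeWeight x E L * g (L ∩ A) =
      ∑ L ∈ A.powerset, outcomeWeight x A L * g L := by
  suffices h : ∀ B, Disjoint A B →
      ∑ L ∈ (B ∪ A).powerset, outcomeWeight x (B ∪ A) L * g (L ∩ A) =
        ∑ L ∈ A.powerset, outcomeWeight x A L * g L by
    simpa only [sdiff_union_of_subset hAE] using h (E \ A) disjoint_sdiff
  intro B hAB
  induction B using Finset.induction_on with
  | empty =>
    rw [empty_union]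
    exact sum_congr rfl fun L hL => by rw [inter_eq_left.2 (mem_powerset.1 hL)]
  | insert e B heB ih =>
    obtain ⟨heA, hAB⟩ := disjoint_insert_right.1 hAB
    have he : e ∉ B ∪ A := by simp only [mem_union, heB, heA, or_self, not_false_eq_true]
    rw [insert_union, sum_outcomeWeight_insert he, ← ih hAB]
    refine sum_congr rfl fun L _ => ?_
    rw [insert_inter_of_notMem heA]
    ring

end OutcomeWeight

section Locality

open Finset Relation

variable {V : Type*}

/-- No pair related by `r` has exactly one endpoint in `A`, i.e. `A` is a union of connected
components of the graph of `r`. -/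
def NoCrossing (r : V → V → Prop) (A : Finset V) : Prop :=
  ∀ ⦃a b⦄, r a b → (a ∈ A ↔ b ∈ A)

theorem NoCrossing.mem_iff_of_reflTransGen {r : V → V → Prop} {A : Finset V}
    (hA : NoCrossing r A) {a b : V} (hab : ReflTransGen r a b) : a ∈ A ↔ b ∈ A := by
  induction hab with
  | refl => rfl
  | tail _ hbc ih => exact ih.trans (hA hbc)

variable [DecidableEq V]

theorem NoCrossing.reflTransGen_inter_offDiag {A : Finset V} {L : Finset (V × V)}
    (hA : NoCrossing (fun a b => (a, b) ∈ L) A) {a b : V} (ha : a ∈ A)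
    (hab : ReflTransGen (fun a b => (a, b) ∈ L) a b) :
    ReflTransGen (fun a b => (a, b) ∈ L ∩ A.offDiag) a b := by
  induction hab with
  | refl => rfl
  | @tail b c hab hbc ih =>
    rcases eq_or_ne b c with rfl | hne
    · exact ih
    · have hb : b ∈ A := (hA.mem_iff_of_reflTransGen hab).1 ha
      exact ih.tail (mem_inter.2 ⟨hbc, mem_offDiag.2 ⟨hb, (hA hbc).1 hb, hne⟩⟩)

variable [Fintype V]

theorem mem_reachSet {S : Finset V} {L : Finset (V × V)} {x : V} :
    x ∈ reachSet S L ↔ ∃ s ∈ S, ReflTransGen (fun a b => (a, b) ∈ L) s x := by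
  simp only [reachSet, mem_filter, mem_univ, true_and]

theorem reachSet_insert (u : V) (S : Finset V) (L : Finset (V × V)) :
    reachSet (insert u S) L = reachSet {u} L ∪ reachSet S L := by
  ext x
  simp only [mem_union, mem_reachSet, mem_insert, mem_singleton, exists_eq_or_imp, exists_eq_left]

theorem NoCrossing.reachSet_inter {A : Finset V} {L : Finset (V × V)}
    (hA : NoCrossing (fun a b => (a, b) ∈ L) A) (S : Finset V) :
    reachSet S L ∩ A = reachSet (S ∩ A) (L ∩ A.offDiag) := by
  ext x
  simp only [mem_inter, mem_reachSet]
  constructor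
  · rintro ⟨⟨s, hs, hsx⟩, hx⟩
    have hsA : s ∈ A := (hA.mem_iff_of_reflTransGen hsx).2 hx
    have hsx' := hA.reflTransGen_inter_offDiag hsA hsx
    exact ⟨s, ⟨hs, hsA⟩, by simpa only [mem_inter] using hsx'⟩
  · rintro ⟨s, ⟨hs, hsA⟩, hsx⟩
    have hsx' : ReflTransGen (fun a b => (a, b) ∈ L) s x :=
      ReflTransGen.mono (fun _ _ h => h.1) s x hsx
    exact ⟨⟨s, hs, hsx'⟩, (hA.mem_iff_of_reflTransGen hsx').1 hsA⟩

theorem NoCrossing.reachSet_singleton_sdiff {A : Finset V} {L : Finset (V × V)}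
    (hA : NoCrossing (fun a b => (a, b) ∈ L) A) {u : V} (hu : u ∈ A) (S : Finset V) :
    reachSet {u} L \ reachSet S L =
      reachSet {u} (L ∩ A.offDiag) \ reachSet (S ∩ A) (L ∩ A.offDiag) := by
  have hsub : reachSet {u} L ⊆ A := fun x hx => by
    obtain ⟨s, hs, hsx⟩ := mem_reachSet.1 hx
    exact (hA.mem_iff_of_reflTransGen hsx).1 (mem_singleton.1 hs ▸ hu)
  have hu_eq : reachSet {u} (L ∩ A.offDiag) = reachSet {u} L := by
    simpa only [singleton_inter_of_mem hu, inter_eq_left.2 hsub] using (hA.reachSet_inter {u}).symm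
  rw [hu_eq, ← hA.reachSet_inter S, sdiff_inter_distrib_right, sdiff_eq_empty_iff_subset.2 hsub,
    union_empty]

theorem edgeWeight_eq_outcomeWeight (p : V → V → ℝ) (L : Finset (V × V)) :
    edgeWeight p L = outcomeWeight (fun e => p e.1 e.2) (univ : Finset V).offDiag L :=
  rfl

theorem marginInf_eq_sum (u : V) (S : Finset V) (p : V → V → ℝ) :
    marginInf u S p = ∑ L ∈ (univ : Finset V).offDiag.powerset,
      edgeWeight p L * #(reachSet {u} L \ reachSet S L) := by
  rw [marginInf, infSpread, infSpread, ← sum_sub_distrib]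
  refine sum_congr rfl fun L _ => ?_
  rw [← mul_sub, reachSet_insert, ← card_sdiff_add_card, Nat.cast_add, add_sub_cancel_right]

theorem noCrossing_of_edgeWeight_ne_zero {p : V → V → ℝ} {A : Finset V}
    (hA : NoCrossing (fun a b => p a b ≠ 0) A) {L : Finset (V × V)}
    (hL : L ⊆ (univ : Finset V).offDiag) (hw : edgeWeight p L ≠ 0) :
    NoCrossing (fun a b => (a, b) ∈ L) A := fun a b hab =>
  hA (by simpa only [if_pos hab] using prod_ne_zero_iff.1 hw (a, b) (hL hab))

theorem NoCrossing.marginInf_eq_sum_offDiag {p : V → V → ℝ} {A : Finset V}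
    (hA : NoCrossing (fun a b => p a b ≠ 0) A) {u : V} (hu : u ∈ A) (S : Finset V) :
    marginInf u S p = ∑ L ∈ A.offDiag.powerset,
      outcomeWeight (fun e => p e.1 e.2) A.offDiag L *
        #(reachSet {u} L \ reachSet (S ∩ A) L) := by
  rw [marginInf_eq_sum, ← sum_outcomeWeight_mul_inter (offDiag_mono (subset_univ A))
    fun L => (#(reachSet {u} L \ reachSet (S ∩ A) L) : ℝ)]
  refine sum_congr rfl fun L hL => ?_
  rw [← edgeWeight_eq_outcomeWeight]
  rcases eq_or_ne (edgeWeight p L) 0 with hw | hw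
  · rw [hw, zero_mul, zero_mul]
  · rw [(noCrossing_of_edgeWeight_ne_zero hA (mem_powerset.1 hL) hw).reachSet_singleton_sdiff hu]

theorem NoCrossing.marginInf_congr {p q : V → V → ℝ} {A S T : Finset V}
    (hp : NoCrossing (fun a b => p a b ≠ 0) A) (hq : NoCrossing (fun a b => q a b ≠ 0) A)
    (hpq : ∀ a ∈ A, ∀ b ∈ A, a ≠ b → p a b = q a b) (hST : S ∩ A = T ∩ A) {u : V} (hu : u ∈ A) :
    marginInf u S p = marginInf u T q := by
  rw [hp.marginInf_eq_sum_offDiag hu, hq.marginInf_eq_sum_offDiag hu, hST]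
  refine sum_congr rfl fun L _ => ?_
  congr 1
  refine prod_congr rfl fun e he => ?_
  obtain ⟨h₁, h₂, hne⟩ := mem_offDiag.1 he
  simp only [hpq _ h₁ _ h₂ hne]

theorem marginInf_eq_of_isolated {p q : V → V → ℝ} {S T : Finset V} {u : V}
    (hp : NoCrossing (fun a b => p a b ≠ 0) {u}) (hq : NoCrossing (fun a b => q a b ≠ 0) {u})
    (hS : u ∉ S) (hT : u ∉ T) : marginInf u S p = marginInf u T q := by
  refine hp.marginInf_congr hq (fun a ha b hb hab => ?_) ?_ (mem_singleton_self u)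
  · exact absurd ((mem_singleton.1 ha).trans (mem_singleton.1 hb).symm) hab
  · rw [inter_singleton_of_notMem hS, inter_singleton_of_notMem hT]

end Locality

section Separable

open Finset

variable {V M : Type*} [Zero M]

/-- All nonzero values of `q` lie on pairs inside `A`: the separability condition on a single
topic. -/
def SupportedOn (q : V → V → M) (A : Finset V) : Prop :=
  ∀ ⦃a b⦄, q a b ≠ 0 → a ∈ A ∧ b ∈ A

theorem SupportedOn.noCrossing {q : V → V → M} {A : Finset V} (hq : SupportedOn q A) :
    NoCrossing (fun a b => q a b ≠ 0) A :=
  fun _ _ hab => iff_of_true (hq hab).1 (hq hab).2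

theorem SupportedOn.noCrossing_of_disjoint {q : V → V → M} {A B : Finset V}
    (hq : SupportedOn q A) (hAB : Disjoint A B) : NoCrossing (fun a b => q a b ≠ 0) B :=
  fun _ _ hab => iff_of_false (disjoint_left.1 hAB (hq hab).1) (disjoint_left.1 hAB (hq hab).2)

variable {ι N : Type*} [AddCommMonoid N]

theorem noCrossing_sum {D : Finset ι} {q : ι → V → V → N} {A : Finset V}
    (hq : ∀ i ∈ D, NoCrossing (fun a b => q i a b ≠ 0) A) :
    NoCrossing (fun a b => (∑ i ∈ D, q i) a b ≠ 0) A := fun a b hab => by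
  simp only [Finset.sum_apply] at hab
  obtain ⟨i, hi, hab⟩ := exists_ne_zero_of_sum_ne_zero hab
  exact hq i hi hab

variable {D : Finset ι} {parts : ι → Finset V} {q : ι → V → V → N}

theorem noCrossing_sum_part (hdisj : (D : Set ι).PairwiseDisjoint parts)
    (hsep : ∀ i ∈ D, SupportedOn (q i) (parts i)) {i : ι} (hi : i ∈ D) :
    NoCrossing (fun a b => (∑ j ∈ D, q j) a b ≠ 0) (parts i) :=
  noCrossing_sum fun j hj => by
    rcases eq_or_ne j i with rfl | hji
    · exact (hsep j hj).noCrossing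
    · exact (hsep j hj).noCrossing_of_disjoint (hdisj hj hi hji)

theorem sum_apply_of_mem_part (hdisj : (D : Set ι).PairwiseDisjoint parts)
    (hsep : ∀ i ∈ D, SupportedOn (q i) (parts i)) {i : ι} (hi : i ∈ D) {a : V}
    (ha : a ∈ parts i) (b : V) : (∑ j ∈ D, q j) a b = q i a b := by
  simp only [Finset.sum_apply]
  refine sum_eq_single_of_mem i hi fun j hj hji => ?_
  by_contra hab
  exact disjoint_left.1 (hdisj hj hi hji) (hsep j hj hab).1 ha

theorem mixture_eq_sum_filter_pos [Fintype ι] {lam : ι → ℝ} (hlam : ∀ i, 0 ≤ lam i)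
    (pt : ι → V → V → ℝ) :
    (fun a b => ∑ i, lam i * pt i a b) = ∑ i with 0 < lam i, fun a b => lam i * pt i a b := by
  funext a b
  rw [Finset.sum_apply, Finset.sum_apply]
  refine (sum_filter_of_ne fun i _ hne => ?_).symm
  exact (hlam i).lt_of_ne (left_ne_zero_of_mul hne).symm

end Separable

section Selection

open Finset

variable {α κ : Type*} [LinearOrder κ]

/-- Whenever `w` lists an entry of `v`, it has already listed all earlier entries of `v`: the
topic-order condition on the output `w` of the algorithm, for a single topic. -/
def PreservesOrder {β γ : Type*} [LT β] [LT γ] (v : β → α) (w : γ → α) : Prop :=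
  ∀ ℓ ℓ' m, v ℓ = w m → ℓ' < ℓ → ∃ m' < m, v ℓ' = w m'

theorem exists_first_notMem [Fintype κ] {v : κ → α} (hv : Function.Injective v) {S : Finset α}
    (hS : #S < Fintype.card κ) : ∃ ℓ, v ℓ ∉ S ∧ ∀ ℓ' < ℓ, v ℓ' ∈ S := by
  have hne : ∃ ℓ, v ℓ ∉ S := by
    by_contra! hall
    exact hS.not_ge (card_le_card_of_injOn v (fun ℓ _ => hall ℓ) hv.injOn)
  obtain ⟨ℓ, hℓ, hmin⟩ := wellFounded_lt.has_min {ℓ | v ℓ ∉ S} hne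
  exact ⟨ℓ, hℓ, fun ℓ' hlt => not_not.1 fun h => hmin ℓ' h hlt⟩

variable [DecidableEq α]

theorem inter_eq_image_Iio [LocallyFiniteOrderBot κ] {v : κ → α} {S A : Finset α}
    (hvA : ∀ ℓ, v ℓ ∈ A) (hrange : ∀ x ∈ S ∩ A, ∃ ℓ, v ℓ = x)
    (hlower : ∀ ⦃ℓ ℓ'⦄, ℓ' < ℓ → v ℓ ∈ S → v ℓ' ∈ S) {ℓ : κ} (hℓ : v ℓ ∉ S)
    (hlt : ∀ ℓ' < ℓ, v ℓ' ∈ S) : S ∩ A = image v (Iio ℓ) := by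
  ext x
  simp only [mem_image, mem_Iio]
  constructor
  · intro hx
    obtain ⟨l, rfl⟩ := hrange x hx
    have hl : v l ∈ S := (mem_inter.1 hx).1
    refine ⟨l, lt_of_not_ge fun hle => hℓ ?_, rfl⟩
    rcases hle.eq_or_lt with rfl | hlt'
    · exact hl
    · exact hlower hlt' hl
  · rintro ⟨l, hl, rfl⟩
    exact mem_inter.2 ⟨hlt l hl, hvA l⟩

theorem le_of_sorted_of_le_last {β : Type*} [Preorder β] {k : ℕ} (hk : 0 < k) {f : α → β}
    {C : Finset α} {w : Fin k → α} (hsorted : ∀ m m' : Fin k, m ≤ m' → f (w m') ≤ f (w m))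
    (hrest : ∀ u ∈ C, u ∉ image w univ → f u ≤ f (w ⟨k - 1, Nat.sub_one_lt_of_lt hk⟩))
    (m : Fin k) (u : α) (hu : u ∈ C) (hum : u ∉ image w (Iio m)) : f u ≤ f (w m) := by
  by_cases huw : u ∈ image w univ
  · obtain ⟨m', -, rfl⟩ := mem_image.1 huw
    exact hsorted m m' (not_lt.1 fun h => hum (mem_image_of_mem w (mem_Iio.2 h)))
  · exact (hrest u hu huw).trans (hsorted m _ (Nat.le_sub_one_of_lt m.2))

theorem PreservesOrder.mem_image_Iio {β γ : Type*} [LT β] [Preorder γ] [LocallyFiniteOrderBot γ]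
    {v : β → α} {w : γ → α} (horder : PreservesOrder v w) {m : γ} {ℓ ℓ' : β} (hlt : ℓ' < ℓ)
    (hℓ : v ℓ ∈ image w (Iio m)) : v ℓ' ∈ image w (Iio m) := by
  simp only [mem_image, mem_Iio] at hℓ ⊢
  obtain ⟨m₁, hm₁, hw⟩ := hℓ
  obtain ⟨m₂, hm₂, hw'⟩ := horder ℓ ℓ' m₁ hw.symm hlt
  exact ⟨m₂, hm₂.trans hm₁, hw'.symm⟩

variable {ι : Type*} {D : Finset ι} {parts : ι → Finset α} {k : ℕ} {v : ι → Fin k → α}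

theorem exists_eq_of_mem_part (hdisj : (D : Set ι).PairwiseDisjoint parts)
    (hvpart : ∀ i ∈ D, ∀ ℓ, v i ℓ ∈ parts i) {x : α}
    (hx : x ∈ D.biUnion fun i => image (v i) univ) {i : ι} (hi : i ∈ D) (hxi : x ∈ parts i) :
    ∃ ℓ, v i ℓ = x := by
  obtain ⟨j, hj, hxj⟩ := mem_biUnion.1 hx
  obtain ⟨ℓ, -, rfl⟩ := mem_image.1 hxj
  obtain rfl : i = j := hdisj.elim_finset hi hj (v j ℓ) hxi (hvpart j hj ℓ)
  exact ⟨ℓ, rfl⟩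

theorem image_Iio_inter_part (hdisj : (D : Set ι).PairwiseDisjoint parts)
    (hvpart : ∀ i ∈ D, ∀ ℓ, v i ℓ ∈ parts i) {w : Fin k → α}
    (hwC : ∀ m, w m ∈ D.biUnion fun i => image (v i) univ) {i : ι} (hi : i ∈ D)
    (horder : PreservesOrder (v i) w) {m ℓ : Fin k} (hℓ : v i ℓ ∉ image w (Iio m))
    (hlt : ∀ ℓ' < ℓ, v i ℓ' ∈ image w (Iio m)) :
    image w (Iio m) ∩ parts i = image (v i) (Iio ℓ) := by
  refine inter_eq_image_Iio (hvpart i hi) (fun x hx => ?_)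
    (fun _ _ => horder.mem_image_Iio) hℓ hlt
  obtain ⟨hxw, hxi⟩ := mem_inter.1 hx
  obtain ⟨m', -, rfl⟩ := mem_image.1 hxw
  exact exists_eq_of_mem_part hdisj hvpart (hwC m') hi hxi

theorem image_Iio_inter_part_of_eq (hdisj : (D : Set ι).PairwiseDisjoint parts)
    (hvpart : ∀ i ∈ D, ∀ ℓ, v i ℓ ∈ parts i) {w : Fin k → α} (hwinj : Function.Injective w)
    (hwC : ∀ m, w m ∈ D.biUnion fun i => image (v i) univ) {i : ι} (hi : i ∈ D)
    (horder : PreservesOrder (v i) w) {m ℓ : Fin k} (hℓ : v i ℓ = w m) :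
    image w (Iio m) ∩ parts i = image (v i) (Iio ℓ) := by
  refine image_Iio_inter_part hdisj hvpart hwC hi horder ?_ fun ℓ' hlt => ?_
  · rw [hℓ, hwinj.mem_finset_image, mem_Iio]
    exact lt_irrefl m
  · obtain ⟨m', hm', hw⟩ := horder ℓ ℓ' m hℓ hlt
    exact hw ▸ mem_image_of_mem w (mem_Iio.2 hm')

theorem exists_notMem_image_Iio_inter_part_eq (hdisj : (D : Set ι).PairwiseDisjoint parts)
    (hvpart : ∀ i ∈ D, ∀ ℓ, v i ℓ ∈ parts i) {w : Fin k → α}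
    (hwC : ∀ m, w m ∈ D.biUnion fun i => image (v i) univ) {i : ι} (hi : i ∈ D)
    (hvinj : Function.Injective (v i))
    (horder : PreservesOrder (v i) w) (m : Fin k) :
    ∃ ℓ, v i ℓ ∉ image w (Iio m) ∧ image w (Iio m) ∩ parts i = image (v i) (Iio ℓ) := by
  have hcard : #(image w (Iio m)) < Fintype.card (Fin k) :=
    card_image_le.trans_lt (by simpa only [Fin.card_Iio, Fintype.card_fin] using m.2)
  obtain ⟨ℓ, hℓ, hlt⟩ := exists_first_notMem hvinj hcard
  exact ⟨ℓ, hℓ, image_Iio_inter_part hdisj hvpart hwC hi horder hℓ hlt⟩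

end Selection

section Greedy

open Finset

variable {V ι : Type*} [Fintype V] [DecidableEq V] {k : ℕ}

/-- Every entry of `v` has the largest marginal influence under `p`, given the earlier entries,
among all vertices not listed earlier. Distinctness of the entries is not part of the definition. -/
def IsGreedySeq (p : V → V → ℝ) (v : Fin k → V) : Prop :=
  ∀ (ℓ : Fin k) (u : V), u ∉ image v (Iio ℓ) →
    marginInf u (image v (Iio ℓ)) p ≤ marginInf (v ℓ) (image v (Iio ℓ)) p

variable {D : Finset ι} {parts : ι → Finset V} {q : ι → V → V → ℝ}

theorem marginInf_sum_of_inter_part_eq (hdisj : (D : Set ι).PairwiseDisjoint parts)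
    (hsep : ∀ i ∈ D, SupportedOn (q i) (parts i)) {i : ι} (hi : i ∈ D) {S T : Finset V}
    (hST : S ∩ parts i = T) {u : V} (hu : u ∈ parts i) :
    marginInf u S (∑ j ∈ D, q j) = marginInf u T (q i) :=
  (noCrossing_sum_part hdisj hsep hi).marginInf_congr (hsep i hi).noCrossing
    (fun _ ha b _ _ => sum_apply_of_mem_part hdisj hsep hi ha b)
    (by rw [← hST, inter_assoc, inter_self]) hu

theorem marginInf_sum_of_notMem_part (hsep : ∀ i ∈ D, SupportedOn (q i) (parts i)) {u : V}
    (hu : ∀ i ∈ D, u ∉ parts i) {j : ι} (hj : j ∈ D) {S T : Finset V} (hS : u ∉ S) (hT : u ∉ T) :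
    marginInf u S (∑ i ∈ D, q i) = marginInf u T (q j) := by
  have hisolated : ∀ i ∈ D, NoCrossing (fun a b => q i a b ≠ 0) {u} := fun i hi =>
    (hsep i hi).noCrossing_of_disjoint (disjoint_singleton_right.2 (hu i hi))
  exact marginInf_eq_of_isolated (noCrossing_sum hisolated) (hisolated j hj) hS hT

theorem IsGreedySeq.marginInf_sum_le (hdisj : (D : Set ι).PairwiseDisjoint parts)
    (hsep : ∀ i ∈ D, SupportedOn (q i) (parts i)) {i : ι} (hi : i ∈ D) {v : Fin k → V}
    (hv : IsGreedySeq (q i) v) {ℓ : Fin k} (hℓ : v ℓ ∈ parts i) {S : Finset V}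
    (hS : S ∩ parts i = image v (Iio ℓ)) {u : V} (huS : u ∉ S)
    (hu : ∀ j ∈ D, u ∈ parts j → j = i) :
    marginInf u S (∑ j ∈ D, q j) ≤ marginInf (v ℓ) S (∑ j ∈ D, q j) := by
  have huT : u ∉ image v (Iio ℓ) := fun h => huS (mem_inter.1 (hS ▸ h)).1
  have hu_eq : marginInf u S (∑ j ∈ D, q j) = marginInf u (image v (Iio ℓ)) (q i) := by
    by_cases hui : u ∈ parts i
    · exact marginInf_sum_of_inter_part_eq hdisj hsep hi hS hui
    · exact marginInf_sum_of_notMem_part hsep (fun j hj huj => hui (hu j hj huj ▸ huj)) hi huS huT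
  rw [hu_eq, marginInf_sum_of_inter_part_eq hdisj hsep hi hS hℓ]
  exact hv ℓ u huT

theorem MIS_correct_general (hdisj : (D : Set ι).PairwiseDisjoint parts)
    (hsep : ∀ i ∈ D, SupportedOn (q i) (parts i))
    {v : ι → Fin k → V} (hvinj : ∀ i ∈ D, Function.Injective (v i))
    (hvpart : ∀ i ∈ D, ∀ ℓ, v i ℓ ∈ parts i) (hgreedy : ∀ i ∈ D, IsGreedySeq (q i) (v i))
    {f : V → ℝ}
    (hf : ∀ i ∈ D, ∀ ℓ, f (v i ℓ) = marginInf (v i ℓ) (image (v i) (Iio ℓ)) (q i))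
    {C : Finset V} (hC : C = D.biUnion fun i => image (v i) univ)
    {w : Fin k → V} (hwinj : Function.Injective w) (hwC : ∀ m, w m ∈ C)
    (hmax : ∀ m, ∀ u ∈ C, u ∉ image w (Iio m) → f u ≤ f (w m))
    (horder : ∀ i ∈ D, PreservesOrder (v i) w) :
    IsGreedySeq (∑ i ∈ D, q i) w := by
  intro m u hu
  subst hC
  set S := image w (Iio m)
  have hvalue : ∀ i ∈ D, ∀ ℓ, S ∩ parts i = image (v i) (Iio ℓ) →
      marginInf (v i ℓ) S (∑ j ∈ D, q j) = f (v i ℓ) := fun i hi ℓ hS => by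
    rw [hf i hi, marginInf_sum_of_inter_part_eq hdisj hsep hi hS (hvpart i hi ℓ)]
  obtain ⟨j, hj, l, hl⟩ : ∃ j ∈ D, ∃ l, v j l = w m := by
    simpa only [mem_biUnion, mem_image, mem_univ, true_and] using hwC m
  have hSj : S ∩ parts j = image (v j) (Iio l) :=
    image_Iio_inter_part_of_eq hdisj hvpart hwinj hwC hj (horder j hj) hl
  rw [← hl]
  by_cases hpart : ∃ i ∈ D, u ∈ parts i
  · obtain ⟨i, hi, hui⟩ := hpart
    obtain ⟨ℓ, hℓ, hSi⟩ := exists_notMem_image_Iio_inter_part_eq hdisj hvpart hwC hi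
      (hvinj i hi) (horder i hi) m
    calc marginInf u S (∑ i ∈ D, q i)
        ≤ marginInf (v i ℓ) S (∑ i ∈ D, q i) :=
          (hgreedy i hi).marginInf_sum_le hdisj hsep hi (hvpart i hi ℓ) hSi hu
            fun i' hi' hui' => hdisj.elim_finset hi' hi u hui' hui
      _ = f (v i ℓ) := hvalue i hi ℓ hSi
      _ ≤ f (w m) := hmax m _ (mem_biUnion.2 ⟨i, hi, mem_image_of_mem _ (mem_univ ℓ)⟩) hℓ
      _ = marginInf (v j l) S (∑ i ∈ D, q i) := by rw [hvalue j hj l hSj, hl]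
  · exact (hgreedy j hj).marginInf_sum_le hdisj hsep hj (hvpart j hj l) hSj hu
      fun i hi hui => absurd ⟨i, hi, hui⟩ hpart

end Greedy

/-- Theorem 4.2: correctness of the Marginal Influence Sort algorithm on fully
separable networks: the sorted sequence of candidates is a greedy sequence for
the mixed influence probability function. -/
theorem MIS_correct {V : Type*} [Fintype V] [DecidableEq V] {d k : ℕ}
    (hk : 0 < k)
    (parts : Fin d → Finset V)
    (hdisj : ∀ i j, i ≠ j → Disjoint (parts i) (parts j))
    (hcover : ∀ x : V, ∃ i, x ∈ parts i)
    (pt : Fin d → V → V → ℝ)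
    (hpt1 : ∀ i u v, 0 ≤ pt i u v ∧ pt i u v ≤ 1) (hpt2 : ∀ i v, pt i v v = 0)
    (hsep : ∀ i u v, pt i u v ≠ 0 → u ∈ parts i ∧ v ∈ parts i)
    (lam : Fin d → ℝ) (hlam : ∀ i, 0 ≤ lam i ∧ lam i ≤ 1)
    (Dplus : Finset (Fin d)) (hD : Dplus = Finset.univ.filter (fun i => 0 < lam i))
    (hDne : Dplus.Nonempty)
    (p : V → V → ℝ) (hpdef : ∀ u w, p u w = ∑ j, lam j * pt j u w)
    -- greedy sequences for each topic in `Dplus`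
    (v : Fin d → Fin k → V)
    (hvinj : ∀ i ∈ Dplus, Function.Injective (v i))
    (hvpart : ∀ i ∈ Dplus, ∀ ℓ : Fin k, v i ℓ ∈ parts i)
    (hgreedy : ∀ i ∈ Dplus, ∀ ℓ : Fin k, ∀ u : V,
      u ∉ Finset.image (v i) (Finset.Iio ℓ) →
      marginInf u (Finset.image (v i) (Finset.Iio ℓ)) (fun a b => lam i * pt i a b) ≤
        marginInf (v i ℓ) (Finset.image (v i) (Finset.Iio ℓ)) (fun a b => lam i * pt i a b))
    -- the pre-computed marginal influences
    (f : V → ℝ)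
    (hf : ∀ i ∈ Dplus, ∀ ℓ : Fin k,
      f (v i ℓ) =
        marginInf (v i ℓ) (Finset.image (v i) (Finset.Iio ℓ)) (fun a b => lam i * pt i a b))
    -- the candidate set
    (C : Finset V) (hC : C = Dplus.biUnion (fun i => Finset.image (v i) Finset.univ))
    -- the output of MIS: k distinct candidates sorted by f
    (w : Fin k → V)
    (hwinj : Function.Injective w)
    (hwC : ∀ m : Fin k, w m ∈ C)
    (hsorted : ∀ m m' : Fin k, m ≤ m' → f (w m') ≤ f (w m))
    (hrest : ∀ u ∈ C, u ∉ Finset.image w Finset.univ → f u ≤ f (w ⟨k - 1, by omega⟩))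
    (horder : ∀ i ∈ Dplus, ∀ ℓ ℓ' : Fin k, ∀ m : Fin k,
      v i ℓ = w m → ℓ' < ℓ → ∃ m' : Fin k, m' < m ∧ v i ℓ' = w m') :
    ∀ m : Fin k, ∀ u : V, u ∉ Finset.image w (Finset.Iio m) →
      marginInf u (Finset.image w (Finset.Iio m)) p ≤
        marginInf (w m) (Finset.image w (Finset.Iio m)) p := by
  obtain rfl : p = ∑ i ∈ Dplus, fun a b => lam i * pt i a b :=
    (funext₂ hpdef).trans (hD ▸ mixture_eq_sum_filter_pos (fun i => (hlam i).1) pt)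
  exact MIS_correct_general (fun i _ j _ hij => hdisj i j hij)
    (fun i _ a b hab => hsep i a b (right_ne_zero_of_mul hab)) hvinj hvpart hgreedy hf hC hwinj hwC
    (le_of_sorted_of_le_last hk hsorted hrest) horder
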